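/- Let E be a real Hilbert space, ν, d ∈ ℕ, L ≥ 0, and let f_λ : E → ℝ (λ ∈ Fin d) be differentiable with L-Lipschitz gradients ∇f_λ. Suppose each f_λ has a point x^λ ∈ E with ∇f_λ(x^λ) = 0, and set M := max_λ ‖x* − x^λ‖ for a given x* ∈ E. Let a : Fin ν → ℝ, B : Fin ν → Fin d → ℝ, let Γ ⊆ S be finite subsets of Fin ν, α ≥ 0, D ≥ 0, u : Fin ν → E with ‖u w − x*‖ ≤ D for every w ∈ Γ, and v ∈ E with ‖v − x*‖ ≤ D. Define z w λ := ∇f_λ(u w) if w ∈ Γ and z w λ := 0 if w ∈ S \ Γ. Then ‖α • Σ_{w ∈ S} (a w) • (Σ_λ (B w λ) • (z w λ − ∇f_λ(v)))‖ ≤ α · (2 L D + L M) · Σ_{w ∈ S} |a w| · (Σ_λ |B w λ|). -/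

import Mathlib

/-- Maximum of a real-valued function over `Fin d` (for `0 < d`). -/
noncomputable def finMax {d : ℕ} (hd : 0 < d) (g : Fin d → ℝ) : ℝ :=
  Finset.univ.sup' (Finset.univ_nonempty_iff.mpr (Fin.pos_iff_nonempty.mp hd)) g

open scoped NNReal

theorem le_finMax {d : ℕ} (hd : 0 < d) (g : Fin d → ℝ) (i : Fin d) : g i ≤ finMax hd g :=
  Finset.le_sup' g (Finset.mem_univ i)

theorem norm_map_sub_map_le_of_norm_sub_le {E F : Type*}
    [SeminormedAddCommGroup E] [SeminormedAddCommGroup F] {K : ℝ≥0} {g : E → F}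
    (hg : LipschitzWith K g) {c x y : E} {r s : ℝ} (hx : ‖x - c‖ ≤ r) (hy : ‖y - c‖ ≤ s) :
    ‖g x - g y‖ ≤ K * (r + s) :=
  calc
    ‖g x - g y‖ ≤ K * ‖x - y‖ := hg.norm_sub_le x y
    _ ≤ K * (‖x - c‖ + ‖y - c‖) := by
      gcongr
      simpa only [norm_sub_rev c y] using norm_sub_le_norm_sub_add_norm_sub x c y
    _ ≤ K * (r + s) := by gcongr

section WeightedSums

variable {𝕜 F ι κ : Type*} [SeminormedRing 𝕜] [SeminormedAddCommGroup F] [Module 𝕜 F]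
  [IsBoundedSMul 𝕜 F]

theorem norm_sum_smul_le_sum_norm_mul (s : Finset ι) (c : ι → 𝕜) {x : ι → F} {C : ι → ℝ}
    (hx : ∀ i ∈ s, ‖x i‖ ≤ C i) : ‖∑ i ∈ s, c i • x i‖ ≤ ∑ i ∈ s, ‖c i‖ * C i :=
  norm_sum_le_of_le s fun i hi =>
    (norm_smul_le _ _).trans (mul_le_mul_of_nonneg_left (hx i hi) (norm_nonneg _))

theorem norm_sum_smul_sum_smul_le (s : Finset ι) (t : Finset κ) (a : ι → 𝕜) (B : ι → κ → 𝕜)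
    {y : ι → κ → F} {C : ℝ} (hy : ∀ i ∈ s, ∀ k ∈ t, ‖y i k‖ ≤ C) :
    ‖∑ i ∈ s, a i • ∑ k ∈ t, B i k • y i k‖ ≤ C * ∑ i ∈ s, ‖a i‖ * ∑ k ∈ t, ‖B i k‖ :=
  calc
    _ ≤ ∑ i ∈ s, ‖a i‖ * ∑ k ∈ t, ‖B i k‖ * C :=
      norm_sum_smul_le_sum_norm_mul s a fun i hi =>
        norm_sum_smul_le_sum_norm_mul t (B i) (hy i hi)
    _ = C * ∑ i ∈ s, ‖a i‖ * ∑ k ∈ t, ‖B i k‖ := by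
      simp only [← Finset.sum_mul, ← mul_assoc]
      exact mul_comm _ _

end WeightedSums

theorem srdo_residual_bound_all_scenarios_general {𝕜 E F ι κ : Type*} [SeminormedRing 𝕜]
    [SeminormedAddCommGroup E] [SeminormedAddCommGroup F] [Module 𝕜 F] [IsBoundedSMul 𝕜 F]
    [Fintype κ] {L : ℝ≥0} {g : κ → E → F} (hg : ∀ lam, LipschitzWith L (g lam))
    {xhat : κ → E} (hxhat : ∀ lam, g lam (xhat lam) = 0)
    {xstar : E} {M : ℝ} (hM : ∀ lam, ‖xstar - xhat lam‖ ≤ M)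
    (a : ι → 𝕜) (B : ι → κ → 𝕜) {Γ : Set ι} {S : Finset ι} (α : 𝕜) {D : ℝ}
    {u : ι → E} (hu : ∀ w ∈ Γ, ‖u w - xstar‖ ≤ D) {v : E} (hv : ‖v - xstar‖ ≤ D)
    {z : ι → κ → F} (hzΓ : ∀ w ∈ Γ, ∀ lam, z w lam = g lam (u w))
    (hzS : ∀ w ∈ S, w ∉ Γ → ∀ lam, z w lam = 0) :
    ‖α • ∑ w ∈ S, a w • ∑ lam, B w lam • (z w lam - g lam v)‖ ≤
      ‖α‖ * (2 * L * D + L * M) * ∑ w ∈ S, ‖a w‖ * ∑ lam, ‖B w lam‖ := by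
  have hD : 0 ≤ D := (norm_nonneg _).trans hv
  -- The zero replacing a straggler's gradient is itself a gradient value, taken at `xhat lam`.
  have z_eq_map_near : ∀ w ∈ S, ∀ lam, ∃ p, ‖p - xstar‖ ≤ D + M ∧ z w lam = g lam p := by
    intro w hw lam
    have hM0 : 0 ≤ M := (norm_nonneg _).trans (hM lam)
    by_cases hwΓ : w ∈ Γ
    · exact ⟨u w, (hu w hwΓ).trans (le_add_of_nonneg_right hM0), hzΓ w hwΓ lam⟩
    · refine ⟨xhat lam, ?_, (hzS w hw hwΓ lam).trans (hxhat lam).symm⟩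
      rw [norm_sub_rev]
      exact (hM lam).trans (le_add_of_nonneg_left hD)
  have entry_bound : ∀ w ∈ S, ∀ lam ∈ Finset.univ,
      ‖z w lam - g lam v‖ ≤ 2 * L * D + L * M := by
    intro w hw lam _
    obtain ⟨p, hp, hzp⟩ := z_eq_map_near w hw lam
    rw [hzp]
    exact (norm_map_sub_map_le_of_norm_sub_le (hg lam) hp hv).trans_eq (by ring)
  rw [mul_assoc]
  exact (norm_smul_le _ _).trans <| mul_le_mul_of_nonneg_left
    (norm_sum_smul_sum_smul_le S Finset.univ a B entry_bound) (norm_nonneg α)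

/-- Residual bound for the decoded partition gradient covering all scenarios of the SRDO
analysis (including Scenario 2 / Division 2, where the coded gradients of the stragglers in
`S \ Γ` are replaced by zero). -/
theorem srdo_residual_bound_all_scenarios
    {E : Type*} [NormedAddCommGroup E] [InnerProductSpace ℝ E] [CompleteSpace E]
    (ν d : ℕ) (hd : 0 < d) (L : ℝ) (hL : 0 ≤ L)
    (f : Fin d → E → ℝ) (gf : Fin d → E → E)
    (hf : ∀ lam x, HasGradientAt (f lam) (gf lam x) x)
    (hlip : ∀ lam u w, ‖gf lam u - gf lam w‖ ≤ L * ‖u - w‖)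
    (xhat : Fin d → E) (hxhat : ∀ lam, gf lam (xhat lam) = 0)
    (xstar : E)
    (a : Fin ν → ℝ) (B : Fin ν → Fin d → ℝ)
    (Γ S : Finset (Fin ν)) (hΓS : Γ ⊆ S)
    (α D : ℝ) (hα : 0 ≤ α) (hD : 0 ≤ D)
    (u : Fin ν → E) (hu : ∀ w ∈ Γ, ‖u w - xstar‖ ≤ D)
    (v : E) (hv : ‖v - xstar‖ ≤ D)
    (z : Fin ν → Fin d → E)
    (hzΓ : ∀ w ∈ Γ, ∀ lam, z w lam = gf lam (u w))
    (hzS : ∀ w ∈ S \ Γ, ∀ lam, z w lam = 0) :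
    ‖α • ∑ w ∈ S, a w • (∑ lam, B w lam • (z w lam - gf lam v))‖ ≤
      α * (2 * L * D + L * finMax hd fun lam => ‖xstar - xhat lam‖) *
        ∑ w ∈ S, |a w| * (∑ lam, |B w lam|) := by
  lift L to ℝ≥0 using hL
  simpa only [Real.norm_eq_abs, abs_of_nonneg hα] using
    srdo_residual_bound_all_scenarios_general (Γ := (Γ : Set (Fin ν)))
      (fun lam => lipschitzWith_iff_norm_sub_le.mpr (hlip lam)) hxhat (le_finMax hd _) a B α hu hv
      hzΓ fun w hw hwΓ => hzS w (Finset.mem_sdiff.mpr ⟨hw, hwΓ⟩)
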